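/- Let n ≥ k ≥ 1 be integers with k ≤ (√(4n−3)+1)/2, and let h(n,k) be the least integer ≥ k such that every sequence in Z/nZ of length h(n,k) having at least k distinct terms contains a nonempty zero-sum subsequence. Then h(n,k) = n − (k² − k)/2. -/

import Mathlib

section SavchevChen

variable {G : Type*} [AddCommGroup G] [DecidableEq G]

/-- set of all subsums (including the empty one) -/
def subsums (T : Multiset G) : Finset G := (T.powerset.map Multiset.sum).toFinset

def ZeroFree (S : Multiset G) : Prop := ∀ T ≤ S, T ≠ 0 → T.sum ≠ 0

def Gen (U : Multiset G) (b : G) : Prop :=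
  ∀ x, (x ∈ subsums U ∧ x ≠ U.sum) ↔ (x + b ∈ subsums U ∧ x + b ≠ 0)

theorem mem_subsums {T : Multiset G} {x : G} : x ∈ subsums T ↔ ∃ V ≤ T, V.sum = x := by
  simp [subsums]

theorem zero_mem_subsums (T : Multiset G) : (0 : G) ∈ subsums T :=
  mem_subsums.2 ⟨0, Multiset.zero_le _, by simp⟩

theorem mem_subsums_cons {T : Multiset G} {c x : G} :
    x ∈ subsums (c ::ₘ T) ↔ x ∈ subsums T ∨ ∃ y ∈ subsums T, y + c = x := by
  simp only [subsums, Multiset.powerset_cons, Multiset.map_add, Multiset.mem_toFinset,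
    Multiset.mem_add, Multiset.map_map, Multiset.mem_map, Function.comp, Multiset.sum_cons]
  constructor
  · rintro (h | ⟨V, hV, rfl⟩)
    · exact Or.inl h
    · exact Or.inr ⟨_, ⟨V, hV, rfl⟩, add_comm _ _⟩
  · rintro (h | ⟨y, ⟨V, hV, rfl⟩, rfl⟩)
    · exact Or.inl h
    · exact Or.inr ⟨V, hV, add_comm _ _⟩

theorem subsums_cons (T : Multiset G) (c : G) :
    subsums (c ::ₘ T) = subsums T ∪ (subsums T).image (· + c) := by
  ext x
  simp only [mem_subsums_cons, Finset.mem_union, Finset.mem_image]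

theorem ZeroFree.mono {S T : Multiset G} (h : ZeroFree S) (hT : T ≤ S) : ZeroFree T :=
  fun V hV => h V (hV.trans hT)

theorem ZeroFree.add_ne {U : Multiset G} {c : G} (h : ZeroFree (c ::ₘ U)) {x : G}
    (hx : x ∈ subsums U) : x + c ≠ 0 := by
  obtain ⟨V, hV, rfl⟩ := mem_subsums.1 hx
  have := h (c ::ₘ V) (Multiset.cons_le_cons c hV) (by simp)
  simpa [add_comm] using this

theorem ZeroFree.sum_add_notMem {U : Multiset G} {c : G} (h : ZeroFree (c ::ₘ U)) :
    U.sum + c ∉ subsums U := by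
  intro hx
  obtain ⟨V, hV, hs⟩ := mem_subsums.1 hx
  obtain ⟨W, rfl⟩ := Multiset.le_iff_exists_add.1 hV
  have hW : W.sum ∈ subsums (V + W) := mem_subsums.2 ⟨W, Multiset.le_add_left _ _, rfl⟩
  apply h.add_ne hW
  rw [Multiset.sum_add, add_assoc] at hs
  simpa using hs.symm

theorem sum_mem_subsums (U : Multiset G) : U.sum ∈ subsums U := mem_subsums.2 ⟨U, le_rfl, rfl⟩

theorem gen_of_card {U : Multiset G} {c : G} (h : ZeroFree (c ::ₘ U))
    (hc : (subsums (c ::ₘ U)).card ≤ (subsums U).card + 1) : Gen U c := by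
  set A := subsums U with hA
  have hs := h.sum_add_notMem
  have h1 : subsums (c ::ₘ U) = insert (U.sum + c) A := by
    symm
    apply Finset.eq_of_subset_of_card_le
    · intro x hx
      rcases Finset.mem_insert.1 hx with rfl | hx
      · exact mem_subsums_cons.2 (Or.inr ⟨_, sum_mem_subsums U, rfl⟩)
      · exact mem_subsums_cons.2 (Or.inl hx)
    · rw [Finset.card_insert_of_notMem hs]; exact hc
  have h2 : (A.erase U.sum).image (· + c) = A.erase 0 := by
    apply Finset.eq_of_subset_of_card_le
    · intro x hx
      obtain ⟨y, hy, rfl⟩ := Finset.mem_image.1 hx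
      have hy' := Finset.mem_erase.1 hy
      refine Finset.mem_erase.2 ⟨h.add_ne hy'.2, ?_⟩
      have : y + c ∈ subsums (c ::ₘ U) := mem_subsums_cons.2 (Or.inr ⟨_, hy'.2, rfl⟩)
      rw [h1, Finset.mem_insert] at this
      rcases this with h3 | h3
      · exact absurd (add_right_cancel h3) hy'.1
      · exact h3
    · rw [Finset.card_image_of_injective _ (add_left_injective c),
        Finset.card_erase_of_mem (sum_mem_subsums U), Finset.card_erase_of_mem (zero_mem_subsums U)]
  intro x
  have h3 : x + c ∈ (A.erase U.sum).image (· + c) ↔ x + c ∈ A.erase 0 := by rw [h2]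
  simp only [Finset.mem_image, Finset.mem_erase, add_left_inj, exists_eq_right] at h3
  tauto

theorem Gen.cons {U : Multiset G} {b : G} (h : ZeroFree (b ::ₘ U)) (hg : Gen U b) :
    Gen (b ::ₘ U) b := by
  have hs := h.sum_add_notMem
  intro x
  have key : (x ∈ subsums (b ::ₘ U) ∧ x ≠ (b ::ₘ U).sum) ↔ x ∈ subsums U := by
    rw [Multiset.sum_cons, mem_subsums_cons]
    constructor
    · rintro ⟨h1 | ⟨y, hy, rfl⟩, h2⟩
      · exact h1
      · refine ((hg y).1 ⟨hy, ?_⟩).1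
        rintro rfl
        exact h2 (add_comm _ _)
    · intro h1
      refine ⟨Or.inl h1, ?_⟩
      rintro rfl
      rw [add_comm] at h1
      exact hs h1
  rw [key, mem_subsums_cons]
  constructor
  · intro hx
    exact ⟨Or.inr ⟨x, hx, rfl⟩, h.add_ne hx⟩
  · rintro ⟨h1 | ⟨y, hy, h1⟩, h2⟩
    · exact ((hg x).2 ⟨h1, h2⟩).1
    · rwa [← add_right_cancel h1]

theorem Gen.unique {U : Multiset G} {b c : G} (hU : U.sum ≠ 0) (hb : Gen U b) (hc : Gen U c) :
    b = c := by
  by_contra hne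
  have hd : c - b ≠ 0 := fun h => hne (sub_eq_zero.1 h).symm
  have h1 := (hc 0).1 ⟨zero_mem_subsums U, hU.symm⟩
  have h2 := (hb (c - b)).2 (by simpa using h1)
  have h3 := hb (-b)
  have h4 := hc (-b)
  have h5 : -b + c = c - b := by abel
  rw [h5] at h4
  have h6 := h3.1 (h4.2 ⟨h2.1, hd⟩)
  simp at h6

theorem Gen.add_replicate {U : Multiset G} {b : G} (hg : Gen U b) (r : ℕ)
    (h : ZeroFree (U + Multiset.replicate r b)) : Gen (U + Multiset.replicate r b) b := by
  induction r with
  | zero => simpa using hg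
  | succ r ih =>
    rw [Multiset.replicate_succ, Multiset.add_cons] at h ⊢
    exact (ih (h.mono (Multiset.le_cons_self _ _))).cons h

theorem exists_gen [Fintype G] (r : ℕ) : ∀ (U R : Multiset G), R.card = r → ZeroFree (U + R) →
    U ≠ 0 → 2 * U.card ≤ (subsums U).card → Fintype.card G < 2 * (U + R).card →
    ∃ b ∈ R, Gen (U + R) b := by
  induction r with
  | zero =>
    intro U R hr _ _ h2 h3
    rw [Multiset.card_eq_zero] at hr
    subst hr
    have := Finset.card_le_univ (subsums U)
    simp at h3
    omega
  | succ r ih =>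
    intro U R hr hz hU h2 h3
    by_cases hex : ∃ c ∈ R, (subsums U).card + 2 ≤ (subsums (c ::ₘ U)).card
    · obtain ⟨c, hc, hcard⟩ := hex
      obtain ⟨R', rfl⟩ := Multiset.exists_cons_of_mem hc
      have e : U + c ::ₘ R' = c ::ₘ U + R' := by
        rw [Multiset.add_cons, Multiset.cons_add]
      rw [e] at hz h3 ⊢
      obtain ⟨b, hb, hg⟩ := ih (c ::ₘ U) R' (by simpa using hr) hz (by simp)
        (by rw [Multiset.card_cons]; omega) h3
      exact ⟨b, Multiset.mem_cons_of_mem hb, hg⟩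
    · push Not at hex
      have hall : ∀ c ∈ R, Gen U c := by
        intro c hc
        refine gen_of_card (hz.mono ?_) (by have := hex c hc; omega)
        rw [← Multiset.singleton_add, add_comm]
        exact add_le_add_right (Multiset.singleton_le.2 hc) U
      obtain ⟨b, hb⟩ := Multiset.card_pos_iff_exists_mem.1 (by omega : 0 < R.card)
      have hUs : U.sum ≠ 0 := hz U (Multiset.le_add_right _ _) hU
      have hR : R = Multiset.replicate R.card b :=
        Multiset.eq_replicate_card.2 fun c hc => (hall c hc).unique hUs (hall b hb)
      refine ⟨b, hb, ?_⟩
      rw [hR] at hz ⊢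
      exact (hall b hb).add_replicate _ hz

/-- all integers up to the sum are subsums -/
def Behaving (xs : Multiset ℕ) : Prop := ∀ i ≤ xs.sum, ∃ V ≤ xs, V.sum = i

theorem Behaving.cons {xs : Multiset ℕ} (h : Behaving xs) {x : ℕ} (hx : x ≤ xs.sum) :
    Behaving (x ::ₘ xs) := by
  intro i hi
  rw [Multiset.sum_cons] at hi
  by_cases h1 : i ≤ xs.sum
  · obtain ⟨V, hV, hs⟩ := h i h1
    exact ⟨V, hV.trans (Multiset.le_cons_self _ _), hs⟩
  · obtain ⟨V, hV, hs⟩ := h (i - x) (by omega)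
    exact ⟨x ::ₘ V, Multiset.cons_le_cons x hV, by rw [Multiset.sum_cons]; omega⟩

theorem behaving_replicate (r : ℕ) : Behaving (Multiset.replicate r 1) := by
  intro i hi
  refine ⟨Multiset.replicate i 1, ?_, by simp⟩
  rw [Multiset.replicate_le_replicate]
  simpa using hi

theorem sum_map_smul (V : Multiset ℕ) (b : G) : (V.map (· • b)).sum = V.sum • b := by
  induction V using Multiset.induction_on with
  | empty => simp
  | cons a s ih => simp [ih, add_smul]

theorem Behaving.smul_ne {xs : Multiset ℕ} (h : Behaving xs) {b : G}
    (hz : ZeroFree (xs.map (· • b))) {i : ℕ} (hi : i ≤ xs.sum) (h0 : i ≠ 0) : i • b ≠ 0 := by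
  obtain ⟨V, hV, rfl⟩ := h i hi
  have := hz (V.map (· • b)) (Multiset.map_le_map hV) (by
    rintro h
    rw [Multiset.map_eq_zero] at h
    subst h
    simp at h0)
  rwa [sum_map_smul] at this

theorem Behaving.mem {xs : Multiset ℕ} (h : Behaving xs) (b : G)
    {i : ℕ} (hi : i ≤ xs.sum) : i • b ∈ subsums (xs.map (· • b)) := by
  obtain ⟨V, hV, rfl⟩ := h i hi
  exact mem_subsums.2 ⟨V.map (· • b), Multiset.map_le_map hV, sum_map_smul _ _⟩

theorem Behaving.inj {xs : Multiset ℕ} (h : Behaving xs) {b : G}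
    (hz : ZeroFree (xs.map (· • b))) {i j : ℕ} (hi : i ≤ xs.sum) (hj : j ≤ xs.sum)
    (hij : i • b = j • b) : i = j := by
  wlog hle : i ≤ j generalizing i j
  · exact (this hj hi hij.symm (by omega)).symm
  by_contra hne
  obtain ⟨d, rfl⟩ := Nat.exists_eq_add_of_le hle
  rw [add_smul, eq_comm, add_eq_left] at hij
  exact h.smul_ne hz (by omega) (by omega) hij

theorem card_le_sum {xs : Multiset ℕ} (h : ∀ x ∈ xs, 1 ≤ x) : xs.card ≤ xs.sum := by
  simpa using Multiset.card_nsmul_le_sum h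

theorem card_subsums_step {xs : Multiset ℕ} (h : Behaving xs) {b c : G}
    (hz : ZeroFree (c ::ₘ xs.map (· • b))) (hc : ∀ x, 1 ≤ x → x ≤ xs.sum → x • b ≠ c) :
    2 * (xs.sum + 1) ≤ (subsums (c ::ₘ xs.map (· • b))).card := by
  have hz' := hz.mono (Multiset.le_cons_self _ _)
  set I := (Finset.range (xs.sum + 1)).image (· • b) with hI
  have hIc : I.card = xs.sum + 1 := by
    rw [hI, Finset.card_image_of_injOn, Finset.card_range]
    intro i hi j hj hij
    simp only [Finset.coe_range, Set.mem_Iio] at hi hj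
    exact h.inj hz' (by omega) (by omega) hij
  have hIs : I ⊆ subsums (xs.map (· • b)) := by
    intro y hy
    obtain ⟨i, hi, rfl⟩ := Finset.mem_image.1 hy
    exact h.mem b (by have := Finset.mem_range.1 hi; omega)
  have hdis : Disjoint I (I.image (· + c)) := by
    rw [Finset.disjoint_left]
    intro y hy hy'
    obtain ⟨z, hz1, hzy⟩ := Finset.mem_image.1 hy'
    obtain ⟨j, hj, rfl⟩ := Finset.mem_image.1 hy
    obtain ⟨i, hi, rfl⟩ := Finset.mem_image.1 hz1
    have hi' := Finset.mem_range.1 hi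
    have hj' := Finset.mem_range.1 hj
    rcases Nat.lt_or_ge i j with hlt | hge
    · obtain ⟨d, rfl⟩ := Nat.exists_eq_add_of_le hlt.le
      rw [add_smul] at hzy
      exact hc d (by omega) (by omega) (add_left_cancel hzy).symm
    · obtain ⟨d, rfl⟩ := Nat.exists_eq_add_of_le hge
      rw [add_smul, add_assoc, add_eq_left] at hzy
      exact hz.add_ne (h.mem b (by omega : d ≤ xs.sum)) hzy
  calc 2 * (xs.sum + 1) = (I ∪ I.image (· + c)).card := by
        rw [Finset.card_union_of_disjoint hdis,
          Finset.card_image_of_injective _ (add_left_injective c), hIc]; omega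
    _ ≤ _ := by
        rw [subsums_cons]
        exact Finset.card_le_card (Finset.union_subset_union hIs (Finset.image_subset_image hIs))

theorem extend_behaving [Fintype G] {S : Multiset G} (hz : ZeroFree S)
    (hn : Fintype.card G < 2 * S.card) {b : G} (hb : Gen S b) (d : ℕ) :
    ∀ (xs : Multiset ℕ) (R : Multiset G), R.card = d → xs.map (· • b) + R = S → b ∉ R →
    (∀ x ∈ xs, 1 ≤ x) → Behaving xs →
    ∃ ys : Multiset ℕ, ys.map (· • b) = S ∧ (∀ x ∈ ys, 1 ≤ x) ∧ Behaving ys := by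
  induction d with
  | zero =>
    intro xs R hR hS _ hp hx
    rw [Multiset.card_eq_zero] at hR
    subst hR
    exact ⟨xs, by simpa using hS, hp, hx⟩
  | succ d ih =>
    intro xs R hR hS hbR hp hx
    obtain ⟨c, hc⟩ := Multiset.card_pos_iff_exists_mem.1 (by omega : 0 < R.card)
    obtain ⟨R', rfl⟩ := Multiset.exists_cons_of_mem hc
    have e : c ::ₘ xs.map (· • b) + R' = S := by
      rw [← hS, Multiset.add_cons, Multiset.cons_add]
    have hbR' : b ∉ R' := fun h => hbR (Multiset.mem_cons_of_mem h)
    by_cases hex : ∃ x, 1 ≤ x ∧ x ≤ xs.sum ∧ x • b = c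
    · obtain ⟨x, hx1, hx2, rfl⟩ := hex
      refine ih (x ::ₘ xs) R' (by simpa using hR) (by simpa using e) hbR' ?_ (hx.cons hx2)
      intro y hy
      rcases Multiset.mem_cons.1 hy with rfl | hy
      · exact hx1
      · exact hp y hy
    · push Not at hex
      exfalso
      have hz1 : ZeroFree (c ::ₘ xs.map (· • b)) := hz.mono (e ▸ Multiset.le_add_right _ _)
      have h1 := card_subsums_step hx hz1 hex
      have h2 := card_le_sum hp
      obtain ⟨b', hb', hg⟩ := exists_gen R'.card (c ::ₘ xs.map (· • b)) R' rfl (e ▸ hz) (by simp)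
        (by rw [Multiset.card_cons, Multiset.card_map]; omega) (e ▸ hn)
      rw [e] at hg
      have hS0 : S ≠ 0 := by rintro rfl; simp at hn
      have := hb.unique (hz S le_rfl hS0) hg
      subst this
      exact hbR' hb'

theorem savchev_chen [Fintype G] {S : Multiset G} (hz : ZeroFree S)
    (hn : Fintype.card G < 2 * S.card) :
    ∃ (b : G) (ys : Multiset ℕ), ys.map (· • b) = S ∧ (∀ x ∈ ys, 1 ≤ x) ∧
      ys.sum < Fintype.card G := by
  obtain ⟨a, ha⟩ := Multiset.card_pos_iff_exists_mem.1 (by omega : 0 < S.card)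
  obtain ⟨R, rfl⟩ := Multiset.exists_cons_of_mem ha
  have ha0 : a ≠ 0 := by
    have := hz {a} (Multiset.singleton_le.2 ha) (by simp)
    simpa using this
  have hA : 2 ≤ (subsums ({a} : Multiset G)).card := by
    have : ({0, a} : Finset G) ⊆ subsums ({a} : Multiset G) := by
      intro x hx
      simp only [Finset.mem_insert, Finset.mem_singleton] at hx
      rcases hx with rfl | rfl
      · exact zero_mem_subsums _
      · simpa using sum_mem_subsums ({x} : Multiset G)
    calc 2 = ({0, a} : Finset G).card := (Finset.card_pair ha0.symm).symm
      _ ≤ _ := Finset.card_le_card this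
  obtain ⟨b, -, hb⟩ := exists_gen R.card {a} R rfl (by simpa using hz) (by simp) (by simpa using hA)
    (by simpa [add_comm] using hn)
  rw [Multiset.singleton_add] at hb
  set S := a ::ₘ R with hS
  obtain ⟨ys, hys, hp, hbe⟩ := extend_behaving hz hn hb _ (Multiset.replicate (S.count b) 1)
    (S.filter (fun x => ¬ (b = x))) rfl (by
      rw [Multiset.map_replicate, one_smul, ← Multiset.filter_eq]
      exact Multiset.filter_add_not _ _) (by simp)
    (by intro x hx; rw [Multiset.eq_of_mem_replicate hx]) (behaving_replicate _)
  refine ⟨b, ys, hys, hp, ?_⟩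
  have hz' : ZeroFree (ys.map (· • b)) := hys ▸ hz
  have : ((Finset.range (ys.sum + 1)).image (· • b)).card = ys.sum + 1 := by
    rw [Finset.card_image_of_injOn, Finset.card_range]
    intro i hi j hj hij
    simp only [Finset.coe_range, Set.mem_Iio] at hi hj
    exact hbe.inj hz' (by omega) (by omega) hij
  have h2 := Finset.card_le_univ ((Finset.range (ys.sum + 1)).image (· • b))
  omega

end SavchevChen

theorem finset_sum_bound (s : Finset ℕ) (h : ∀ x ∈ s, 1 ≤ x) :
    s.card * (s.card + 1) ≤ 2 * ∑ x ∈ s, x := by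
  induction s using Finset.induction_on_max with
  | empty => simp
  | insert a s hmax ih =>
    have ha : a ∉ s := fun h => lt_irrefl _ (hmax a h)
    rw [Finset.card_insert_of_notMem ha, Finset.sum_insert ha]
    have h1 := ih fun x hx => h x (Finset.mem_insert_of_mem hx)
    have h2 : s ⊆ Finset.Ico 1 a := fun x hx =>
      Finset.mem_Ico.2 ⟨h x (Finset.mem_insert_of_mem hx), hmax x hx⟩
    have h3 := Finset.card_le_card h2
    have h4 := h a (Finset.mem_insert_self _ _)
    rw [Nat.card_Ico] at h3
    have h5 : s.card + 1 ≤ a := by omega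
    nlinarith

theorem multiset_sum_bound (xs : Multiset ℕ) (h : ∀ x ∈ xs, 1 ≤ x) :
    2 * xs.card + xs.toFinset.card * (xs.toFinset.card - 1) ≤ 2 * xs.sum := by
  obtain ⟨R, hR⟩ := Multiset.le_iff_exists_add.1 (Multiset.dedup_le xs)
  have h1 := finset_sum_bound xs.toFinset (by simpa using h)
  have h2 : R.card ≤ R.sum := card_le_sum fun x hx => h x (by rw [hR]; simp [hx])
  have h3 : xs.card = xs.toFinset.card + R.card := by
    conv_lhs => rw [hR]
    rw [Multiset.card_add]; rfl
  have h4 : xs.sum = (∑ x ∈ xs.toFinset, x) + R.sum := by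
    conv_lhs => rw [hR]
    rw [Multiset.sum_add, Finset.sum_eq_multiset_sum]; simp
  rw [h3, h4]
  rcases Nat.eq_zero_or_pos xs.toFinset.card with h0 | h0
  · rw [h0]; omega
  · obtain ⟨q, hq⟩ := Nat.exists_eq_add_of_lt h0
    rw [hq] at h1 ⊢
    simp only [zero_add, Nat.add_sub_cancel] at h1 ⊢
    nlinarith

theorem stmt18 (n k : ℕ) (hk1 : 1 ≤ k) (hkn : k ≤ n)
    (hk : (k : ℝ) ≤ (Real.sqrt (4 * (n : ℝ) - 3) + 1) / 2) :
    IsLeast {m : ℕ | k ≤ m ∧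
      ∀ α : List (ZMod n), α.length = m → k ≤ α.toFinset.card →
        ∃ t : List (ZMod n), t.Sublist α ∧ t ≠ [] ∧ t.sum = 0}
      (n - (k ^ 2 - k) / 2) := by
  have hn1 : 1 ≤ n := hk1.trans hkn
  haveI : NeZero n := ⟨by omega⟩
  obtain ⟨q, rfl⟩ := Nat.exists_eq_add_of_le' hk1
  have hcond : q * (q + 1) + 1 ≤ n := by
    have h1 : (1 : ℝ) ≤ n := by exact_mod_cast hn1
    have h2 : (2 * (q : ℝ) + 1) ≤ Real.sqrt (4 * (n : ℝ) - 3) := by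
      push_cast at hk; linarith
    have h3 : (2 * (q : ℝ) + 1) ^ 2 ≤ 4 * (n : ℝ) - 3 := by
      rw [← Real.sq_sqrt (by linarith : (0:ℝ) ≤ 4 * (n : ℝ) - 3)]
      exact pow_le_pow_left₀ (by positivity) h2 2
    have : ((q * (q + 1) + 1 : ℕ) : ℝ) ≤ n := by push_cast; nlinarith
    exact_mod_cast this
  obtain ⟨T, hT⟩ := Nat.even_mul_succ_self q
  have hT' : ((q + 1) ^ 2 - (q + 1)) / 2 = T := by
    have : (q + 1) ^ 2 = q * (q + 1) + (q + 1) := by ring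
    rw [this, Nat.add_sub_cancel, hT]; omega
  rw [hT']
  rw [hT] at hcond
  have hqT : q ≤ T + 0 := by nlinarith [Nat.le_of_lt_succ (Nat.lt_succ_self q), sq_nonneg ((q:ℤ) - 1), Nat.le_mul_self q]
  constructor
  · refine ⟨by omega, ?_⟩
    intro α hlen hcard
    by_contra hno
    push Not at hno
    have hz : ZeroFree (α : Multiset (ZMod n)) := by
      intro V hV hV0 hs
      induction V using Quotient.inductionOn with
      | h l =>
        obtain ⟨l', hp, hsub⟩ := (Multiset.coe_le.1 hV : l.Subperm α)
        refine hno l' hsub ?_ ?_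
        · rintro rfl
          apply hV0
          have := hp.symm.eq_nil
          subst this
          rfl
        · rw [hp.sum_eq]
          simpa using hs
    obtain ⟨b, ys, hys, hp, hsum⟩ := savchev_chen hz (by
      rw [ZMod.card, Multiset.coe_card, hlen]; omega)
    rw [ZMod.card] at hsum
    have h1 := multiset_sum_bound ys hp
    have h2 : ys.card = n - T := by
      rw [← hlen, ← Multiset.coe_card, ← hys, Multiset.card_map]
    have h3 : q + 1 ≤ ys.toFinset.card := by
      refine hcard.trans ?_
      have : α.toFinset = ys.toFinset.image (· • b) := by
        rw [← List.toFinset_coe, ← hys]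
        ext x; simp
      rw [this]
      exact Finset.card_image_le
    have h4 : (q + 1) * q ≤ ys.toFinset.card * (ys.toFinset.card - 1) :=
      Nat.mul_le_mul h3 (by omega)
    have h5 : (q + 1) * q = T + T := by rw [← hT, mul_comm]
    omega
  · rintro m ⟨hm, hall⟩
    by_contra hlt
    push Not at hlt
    set l : List ℕ := List.replicate (m - (q + 1)) 1 ++ List.range' 1 (q + 1) with hl
    have hlsum : l.sum = m + T := by
      have h1 : (List.range' 1 (q + 1)).sum = T + (q + 1) := by
        have h0 : ∀ r, 2 * (List.range' 1 r).sum = r * (r + 1) := by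
          intro r
          induction r with
          | zero => simp
          | succ r ih =>
            rw [List.range'_concat, List.sum_append, mul_add, ih]
            simp
            ring
        have := h0 (q + 1)
        nlinarith
      rw [hl, List.sum_append, h1]
      simp
      omega
    have hpos : ∀ x ∈ l, 1 ≤ x := by
      intro x hx
      rw [hl, List.mem_append] at hx
      rcases hx with hx | hx
      · rw [List.eq_of_mem_replicate hx]
      · exact (List.mem_range'_1.1 hx).1
    obtain ⟨t, ht, ht0, hts⟩ := hall (l.map (Nat.cast : ℕ → ZMod n)) (by simp [hl]; omega) (by
      have hsub : (Finset.Icc 1 (q + 1)).image (Nat.cast : ℕ → ZMod n) ⊆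
          (l.map (Nat.cast : ℕ → ZMod n)).toFinset := by
        intro x hx
        obtain ⟨i, hi, rfl⟩ := Finset.mem_image.1 hx
        rw [List.mem_toFinset]
        refine List.mem_map_of_mem ?_
        rw [hl, List.mem_append]
        right
        rw [List.mem_range'_1]
        have := Finset.mem_Icc.1 hi
        omega
      refine le_trans ?_ (Finset.card_le_card hsub)
      rw [Finset.card_image_of_injOn, Nat.card_Icc]
      · omega
      · intro i hi j hj hij
        simp only [Finset.coe_Icc, Set.mem_Icc] at hi hj
        rw [ZMod.natCast_eq_natCast_iff'] at hij
        rwa [Nat.mod_eq_of_lt (by omega), Nat.mod_eq_of_lt (by omega)] at hij)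
    obtain ⟨l', hl', rfl⟩ := List.sublist_map_iff.1 ht
    have h1 : l'.sum ≤ l.sum := hl'.sum_le_sum (by intro x _; exact Nat.zero_le x)
    have h2 : (l'.sum : ZMod n) = 0 := by
      rw [Nat.cast_list_sum]; exact hts
    rw [ZMod.natCast_eq_zero_iff] at h2
    have h3 : l'.sum = 0 := Nat.eq_zero_of_dvd_of_lt h2 (by omega)
    apply ht0
    rw [List.map_eq_nil_iff]
    cases l' with
    | nil => rfl
    | cons a s =>
      exfalso
      have := hpos a (hl'.subset (List.mem_cons_self))
      rw [List.sum_cons] at h3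
      omega
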